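/- Let c ∈ ℤ[ω] satisfy c ≡ 1 + α₂λ² + α₃λ³ (mod 9) with α₂, α₃ ∈ {−1,0,1} and λ = 1 − ω. Then (ω/c)₃ = ω^{α₂} and (λ/c)₃ = ω^{−α₃}. In particular, if c ≡ 1 (mod 9), then (ω/c)₃ = (λ/c)₃ = 1. -/

import Mathlib

open Complex

noncomputable section

/-- The primitive cube root of unity `ω = e^{2πi/3}`. -/
def ω : ℂ := Complex.exp (2 * Real.pi * Complex.I / 3)

/-- The ring of Eisenstein integers `ℤ[ω]`, as a subring of `ℂ`. -/
def Zω : Subring ℂ := Subring.closure {ω}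

/-- `ω` as an element of `ℤ[ω]`. -/
def ωZ : Zω := ⟨ω, Subring.subset_closure rfl⟩

/-- The ramified prime `λ = 1 - ω` of `ℤ[ω]`. -/
def lamZ : Zω := 1 - ωZ

/-- The norm `N(a) = |a|²` from `ℚ(ω)` to `ℚ`, restricted to `ℤ[ω]`. -/
def Nm (a : Zω) : ℝ := Complex.normSq (a : ℂ)

/-- The norm of an Eisenstein integer, as a natural number. -/
def NmNat (a : Zω) : ℕ := ⌊Complex.normSq (a : ℂ)⌋₊

/-- `e(z) = e^{2πi Tr(z)} = e^{2πi (z + z̄)}`. -/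
def eE (z : ℂ) : ℂ := Complex.exp (2 * Real.pi * Complex.I * (z + (starRingEnd ℂ) z))

/-- `χ` is the cubic residue symbol `χ a b = (a/b)₃` on `ℤ[ω]`:
it is multiplicative in both arguments, and at prime moduli `π` coprime to `3`
it is given by the power-residue congruence
`(a/π)₃ ≡ a^{(N(π)-1)/3} (mod π)`, with values among `{1, ω, ω²}` (and `0` when `π ∣ a`). -/
def IsCubicSymbol (χ : Zω → Zω → Zω) : Prop :=
  (∀ a b₁ b₂ : Zω, χ a (b₁ * b₂) = χ a b₁ * χ a b₂) ∧
  (∀ a₁ a₂ b : Zω, χ (a₁ * a₂) b = χ a₁ b * χ a₂ b) ∧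
  (∀ a : Zω, χ a 1 = 1) ∧
  (∀ a π : Zω, Prime π → IsCoprime π 3 →
    (π ∣ a → χ a π = 0) ∧
    (¬ π ∣ a →
      ((χ a π : ℂ) = 1 ∨ (χ a π : ℂ) = ω ∨ (χ a π : ℂ) = ω ^ 2) ∧
      π ∣ (a ^ ((NmNat π - 1) / 3) - χ a π)))

/-- The shifted cubic Gauss sum `g(ν,c) = Σ_{d mod c} (d/c)₃ e(νd/c)`,
relative to a cubic residue symbol `χ`. -/
def gauss (χ : Zω → Zω → Zω) (ν c : Zω) : ℂ :=
  ∑' q : Zω ⧸ Ideal.span {c},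
    ((χ (Quotient.out q) c : Zω) : ℂ) * eE (((ν * Quotient.out q : Zω) : ℂ) / (c : ℂ))

/-- `μ` is the Möbius function of `ℤ[ω]`. -/
def IsMoebiusZω (μ : Zω → ℤ) : Prop :=
  μ 1 = 1 ∧
  (∀ a : Zω, ¬ Squarefree a → μ a = 0) ∧
  (∀ a b : Zω, IsCoprime a b → μ (a * b) = μ a * μ b) ∧
  (∀ π : Zω, Prime π → μ π = -1)

end

theorem om_form : ω = ⟨-1/2, Real.sqrt 3 / 2⟩ := by
  have h : ω = Complex.exp ((2 * Real.pi / 3 : ℝ) * Complex.I) := by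
    unfold ω; congr 1; push_cast; ring
  have e : (2 * Real.pi / 3 : ℝ) = Real.pi - Real.pi / 3 := by ring
  apply Complex.ext
  · rw [h, Complex.exp_ofReal_mul_I_re, e, Real.cos_pi_sub, Real.cos_pi_div_three]; norm_num
  · rw [h, Complex.exp_ofReal_mul_I_im, e, Real.sin_pi_sub, Real.sin_pi_div_three]

theorem om_quad : ω ^ 2 + ω + 1 = 0 := by
  have h3 : Real.sqrt 3 * Real.sqrt 3 = 3 := Real.mul_self_sqrt (by norm_num)
  rw [om_form]
  apply Complex.ext
  · simp [pow_two]; nlinarith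
  · simp [pow_two]; ring

theorem om_cube : ω ^ 3 = 1 := by linear_combination (ω - 1) * om_quad
theorem om_ne_zero : ω ≠ 0 := Complex.exp_ne_zero _

theorem omZ_coe : ((ωZ : Zω) : ℂ) = ω := rfl
theorem omZ_quad : ωZ ^ 2 + ωZ + 1 = 0 := by
  apply Subtype.ext; push_cast; exact om_quad
theorem omZ_cube : ωZ ^ 3 = 1 := by linear_combination (ωZ - 1) * omZ_quad

theorem om_zpow_eq {a b : ℤ} (h : (3 : ℤ) ∣ a - b) : ω ^ a = ω ^ b := by
  obtain ⟨k, hk⟩ := h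
  have : a = b + 3 * k := by linarith
  rw [this, zpow_add₀ om_ne_zero, zpow_mul]
  have : ω ^ (3 : ℤ) = 1 := by exact_mod_cast om_cube
  rw [this]; simp

theorem Z_rep (z : Zω) : ∃ a b : ℤ, z = a + b * ωZ := by
  obtain ⟨z, hz⟩ := z
  have : ∃ a b : ℤ, z = a + b * ω := by
    unfold Zω at hz
    induction hz using Subring.closure_induction with
    | mem x hx => exact ⟨0, 1, by simpa using hx⟩
    | zero => exact ⟨0, 0, by simp⟩
    | one => exact ⟨1, 0, by simp⟩
    | add x y _ _ hx hy =>
      obtain ⟨a, b, rfl⟩ := hx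
      obtain ⟨c, d, rfl⟩ := hy
      exact ⟨a + c, b + d, by push_cast; ring⟩
    | neg x _ hx =>
      obtain ⟨a, b, rfl⟩ := hx
      exact ⟨-a, -b, by push_cast; ring⟩
    | mul x y _ _ hx hy =>
      obtain ⟨a, b, rfl⟩ := hx
      obtain ⟨c, d, rfl⟩ := hy
      exact ⟨a * c - b * d, a * d + b * c - b * d, by
        push_cast; linear_combination (b * d : ℂ) * om_quad⟩
  obtain ⟨a, b, h⟩ := this
  exact ⟨a, b, Subtype.ext (by push_cast; exact h)⟩

theorem normSq_rep (a b : ℝ) : Complex.normSq ((a : ℂ) + b * ω) = a ^ 2 - a * b + b ^ 2 := by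
  have h3 : Real.sqrt 3 * Real.sqrt 3 = 3 := Real.mul_self_sqrt (by norm_num)
  rw [om_form, Complex.normSq_apply]
  simp
  nlinarith

theorem normSq_repZ (a b : ℤ) :
    Complex.normSq (((a + b * ωZ : Zω)) : ℂ) = ((a ^ 2 - a * b + b ^ 2 : ℤ) : ℝ) := by
  have := normSq_rep a b
  push_cast at this ⊢
  exact this

theorem form_nonneg (a b : ℤ) : 0 ≤ a ^ 2 - a * b + b ^ 2 := by
  nlinarith [sq_nonneg (2 * a - b), sq_nonneg b]

theorem NmNat_rep (a b : ℤ) : ((NmNat (a + b * ωZ) : ℕ) : ℤ) = a ^ 2 - a * b + b ^ 2 := by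
  unfold NmNat
  rw [normSq_repZ]
  obtain ⟨m, hm⟩ := Int.eq_ofNat_of_zero_le (form_nonneg a b)
  rw [hm]
  simp

theorem NmNat_cast (z : Zω) : (NmNat z : ℝ) = Complex.normSq (z : ℂ) := by
  obtain ⟨a, b, rfl⟩ := Z_rep z
  rw [normSq_repZ, ← NmNat_rep]; simp

theorem NmNat_mul (x y : Zω) : NmNat (x * y) = NmNat x * NmNat y := by
  have : (NmNat (x * y) : ℝ) = NmNat x * NmNat y := by
    simp [NmNat_cast]
  exact_mod_cast this

theorem rep_zero {a b : ℤ} (h : (a + b * ωZ : Zω) = 0) : a = 0 ∧ b = 0 := by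
  have h1 : ((NmNat (a + b * ωZ) : ℕ) : ℤ) = 0 := by rw [h]; simp [NmNat]
  rw [NmNat_rep] at h1
  have hb : b = 0 := by
    have : b ^ 2 = 0 := by nlinarith [sq_nonneg (2 * a - b), sq_nonneg b]
    exact pow_eq_zero_iff (by norm_num) |>.mp this
  subst hb
  refine ⟨?_, rfl⟩
  have : a ^ 2 = 0 := by linarith
  exact pow_eq_zero_iff (by norm_num) |>.mp this

theorem rep_inj {a b c d : ℤ} (h : (a + b * ωZ : Zω) = c + d * ωZ) : a = c ∧ b = d := by
  have : (((a - c : ℤ) : Zω) + ((b - d : ℤ) : Zω) * ωZ) = 0 := by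
    push_cast; linear_combination h
  have := rep_zero this
  omega

theorem NmNat_eq_zero {z : Zω} : NmNat z = 0 ↔ z = 0 := by
  rw [← Nat.cast_eq_zero (R := ℝ), NmNat_cast, Complex.normSq_eq_zero]
  simp

theorem NmNat_unit {z : Zω} (h : NmNat z = 1) : IsUnit z := by
  obtain ⟨a, b, rfl⟩ := Z_rep z
  have h1 := NmNat_rep a b
  rw [h] at h1
  refine IsUnit.of_mul_eq_one (((a - b : ℤ) : Zω) + ((-b : ℤ) : Zω) * ωZ) ?_
  have h2 : ((a ^ 2 - a * b + b ^ 2 : ℤ) : Zω) = 1 := by rw [← h1]; simp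
  push_cast at h2 ⊢
  linear_combination h2 - (b : Zω) ^ 2 * omZ_quad

theorem unit_NmNat {z : Zω} (h : IsUnit z) : NmNat z = 1 := by
  obtain ⟨y, hy⟩ := h.exists_right_inv
  have := NmNat_mul z y
  rw [hy] at this
  have h1 : NmNat 1 = 1 := by simp [NmNat]
  rw [h1] at this
  exact Nat.eq_one_of_mul_eq_one_right this.symm

theorem exists_div (x y : Zω) (hy : y ≠ 0) : ∃ q : Zω, NmNat (x - y * q) < NmNat y := by
  have hyc : (y : ℂ) ≠ 0 := by simpa using hy
  have hs : Real.sqrt 3 ≠ 0 := by positivity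
  set z : ℂ := x / y with hz
  set t : ℝ := z.im * 2 / Real.sqrt 3
  set s : ℝ := z.re + t / 2
  have hzs : z = s + t * ω := by
    rw [om_form]
    apply Complex.ext
    · simp [s]; ring
    · simp [t]; field_simp
  refine ⟨(round s : ℤ) + (round t : ℤ) * ωZ, ?_⟩
  have hlt : Complex.normSq (z - ((round s : ℤ) + (round t : ℤ) * ω)) < 1 := by
    have e : z - ((round s : ℤ) + (round t : ℤ) * ω) =
        ((s - round s : ℝ) : ℂ) + ((t - round t : ℝ) : ℂ) * ω := by
      rw [hzs]; push_cast; ring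
    rw [e, normSq_rep]
    have h1 := abs_le.mp (abs_sub_round s)
    have h2 := abs_le.mp (abs_sub_round t)
    nlinarith [sq_nonneg (s - round s + (t - round t)), h1.1, h1.2, h2.1, h2.2]
  have : (NmNat (x - y * ((round s : ℤ) + (round t : ℤ) * ωZ)) : ℝ) < NmNat y := by
    rw [NmNat_cast, NmNat_cast]
    have e : ((x - y * ((round s : ℤ) + (round t : ℤ) * ωZ) : Zω) : ℂ) =
        y * (z - ((round s : ℤ) + (round t : ℤ) * ω)) := by
      push_cast; rw [hz, mul_sub, mul_div_cancel₀ _ hyc]; rfl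
    rw [e, Complex.normSq_mul]
    have : 0 < Complex.normSq (y : ℂ) := Complex.normSq_pos.mpr hyc
    nlinarith
  exact_mod_cast this

instance instPID : IsPrincipalIdealRing Zω where
  principal I := by
    by_cases hI : I = ⊥
    · subst hI; infer_instance
    · obtain ⟨x, hx, hx0⟩ := Submodule.exists_mem_ne_zero_of_ne_bot hI
      let S : Set ℕ := {n | ∃ y ∈ I, y ≠ 0 ∧ NmNat y = n}
      have hS : S.Nonempty := ⟨_, x, hx, hx0, rfl⟩
      obtain ⟨y, hyI, hy0, hyn⟩ := Nat.sInf_mem hS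
      refine ⟨y, le_antisymm ?_ ?_⟩
      · intro z hz
        obtain ⟨q, hq⟩ := exists_div z y hy0
        have hmem : z - y * q ∈ I := I.sub_mem hz (I.mul_mem_right _ hyI)
        have : z - y * q = 0 := by
          by_contra hne
          have := Nat.sInf_le (s := S) ⟨_, hmem, hne, rfl⟩
          omega
        exact Ideal.mem_span_singleton.mpr ⟨q, by linear_combination this⟩
      · exact (Ideal.span_singleton_le_iff_mem _).mpr hyI

noncomputable def basZ : Module.Basis (Fin 2) ℤ Zω :=
  Module.Basis.mk (v := ![(1 : Zω), ωZ])
    (by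
      rw [Fintype.linearIndependent_iff]
      intro g hg
      simp [Fin.sum_univ_two] at hg
      have := rep_zero (a := g 0) (b := g 1) (by simpa using hg)
      intro i; fin_cases i
      · exact this.1
      · exact this.2)
    (by
      intro z _
      obtain ⟨a, b, rfl⟩ := Z_rep z
      have h1 : (1 : Zω) ∈ Submodule.span ℤ (Set.range ![(1 : Zω), ωZ]) :=
        Submodule.subset_span ⟨0, rfl⟩
      have h2 : ωZ ∈ Submodule.span ℤ (Set.range ![(1 : Zω), ωZ]) :=
        Submodule.subset_span ⟨1, rfl⟩
      have := Submodule.add_mem _ (Submodule.smul_mem _ a h1) (Submodule.smul_mem _ b h2)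
      simpa using this)

theorem card_quot (p : Zω) : Nat.card (Zω ⧸ Ideal.span {p}) = NmNat p := by
  have : Module.Free ℤ Zω := Module.Free.of_basis basZ
  have : Module.Finite ℤ Zω := Module.Finite.of_basis basZ
  have h : Ideal.absNorm (Ideal.span {p}) = NmNat p := by
    rw [Ideal.absNorm_span_singleton]
    obtain ⟨a, b, rfl⟩ := Z_rep p
    have h0 : basZ 0 = 1 := by simp [basZ]
    have h1 : basZ 1 = ωZ := by simp [basZ]
    have hrep : ∀ x y : ℤ, basZ.repr ((x : Zω) + y * ωZ) = Finsupp.single 0 x + Finsupp.single 1 y := by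
      intro x y
      have : ((x : Zω) + y * ωZ) = x • basZ 0 + y • basZ 1 := by rw [h0, h1]; simp
      rw [this, map_add, map_smul, map_smul, Module.Basis.repr_self, Module.Basis.repr_self]
      simp
    have hm1 : ((a + b * ωZ : Zω)) * ωZ = ((-b : ℤ) : Zω) + ((a - b : ℤ) : Zω) * ωZ := by
      push_cast; linear_combination (b : Zω) * omZ_quad
    rw [Algebra.norm_eq_matrix_det basZ, Matrix.det_fin_two]
    simp only [Algebra.leftMulMatrix_eq_repr_mul, h0, h1, mul_one, hm1, hrep]
    simp
    have := NmNat_rep a b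
    have e : a * (a - b) + b * b = a ^ 2 - a * b + b ^ 2 := by ring
    rw [e, ← this]; simp
  rw [← h, Ideal.absNorm_apply, Submodule.cardQuot_apply]
set_option linter.unusedSectionVars false
set_option linter.unusedSimpArgs false

theorem omZ_ne_zero : ωZ ≠ 0 := by
  intro h; have := omZ_cube; rw [h] at this; simp at this
theorem omZ_ne_one : ωZ ≠ 1 := by
  intro h
  have := rep_inj (a := 0) (b := 1) (c := 1) (d := 0) (by push_cast; linear_combination h)
  omega
theorem omZ_sq_ne_one : ωZ ^ 2 ≠ 1 := by
  intro h
  have := rep_inj (a := -1) (b := -1) (c := 1) (d := 0)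
    (by push_cast; linear_combination h - omZ_quad)
  omega
theorem omZ_sq_ne : ωZ ^ 2 ≠ ωZ := by
  intro h
  have := rep_inj (a := -1) (b := -1) (c := 0) (d := 1)
    (by push_cast; linear_combination h - omZ_quad)
  omega

theorem omZ_sq_ne_zero : ωZ ^ 2 ≠ 0 := pow_ne_zero 2 omZ_ne_zero

theorem omZ_ne_neg : ωZ ≠ -1 := by
  intro h; apply omZ_sq_ne_one; rw [h]; ring

section fieldpart
variable {F : Type*} [Field F] [Fintype F] [DecidableEq F]

open Classical in
/-- Cyclotomic numbers of order three. -/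
noncomputable def cyc (ψ : MulChar F Zω) (s t : Zω) : ℕ :=
  (Finset.univ.filter (fun x : F => ψ x = s ∧ ψ (1 - x) = t)).card

open Classical in
/-- The size of a fibre of the character. -/
noncomputable def fib (ψ : MulChar F Zω) (s : Zω) : ℕ :=
  (Finset.univ.filter (fun x : F => ψ x = s)).card

theorem psi_zero (ψ : MulChar F Zω) : ψ 0 = 0 := MulChar.map_zero ψ

theorem cyc_symm (ψ : MulChar F Zω) (s t : Zω) : cyc ψ s t = cyc ψ t s := by
  classical
  unfold cyc
  refine Finset.card_bij' (fun x _ => 1 - x) (fun x _ => 1 - x) ?_ ?_ ?_ ?_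
  · intro x hx; simp at hx ⊢; exact ⟨hx.2, hx.1⟩
  · intro x hx; simp at hx ⊢; exact ⟨hx.2, hx.1⟩
  · intro x hx; simp
  · intro x hx; simp

theorem psi_neg_one (ψ : MulChar F Zω) (hc : ∀ x, x ≠ 0 → ψ x ^ 3 = 1) : ψ (-1) = 1 := by
  have := hc (-1) (by simp)
  rw [← map_pow] at this
  rw [← this]; congr 1; ring

theorem psi_inv (ψ : MulChar F Zω) (hc : ∀ x, x ≠ 0 → ψ x ^ 3 = 1) (x : F) (hx : x ≠ 0) :
    ψ x⁻¹ = ψ x ^ 2 := by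
  have h1 : ψ x⁻¹ * ψ x = 1 := by rw [← map_mul, inv_mul_cancel₀ hx, map_one]
  linear_combination (ψ x ^ 2) * h1 - ψ x⁻¹ * hc x hx

theorem cyc_inv_le (ψ : MulChar F Zω) (hc : ∀ x, x ≠ 0 → ψ x ^ 3 = 1) (s t : Zω) (hs : s ≠ 0) :
    cyc ψ s t ≤ cyc ψ (s ^ 2) (t * s ^ 2) := by
  classical
  unfold cyc
  refine Finset.card_le_card_of_injOn (fun x => x⁻¹) ?_ ?_
  · intro x hx
    simp at hx ⊢
    have hx0 : x ≠ 0 := by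
      rintro rfl; apply hs; rw [← hx.1]; exact psi_zero ψ
    refine ⟨by rw [psi_inv ψ hc x hx0, hx.1], ?_⟩
    have : 1 - x⁻¹ = (-1) * ((1 - x) * x⁻¹) := by field_simp; ring
    rw [this, map_mul, map_mul, psi_neg_one ψ hc, psi_inv ψ hc x hx0, hx.1, hx.2]; ring
  · intro x _ y _ h; simpa using h

theorem cyc_inv (ψ : MulChar F Zω) (hc : ∀ x, x ≠ 0 → ψ x ^ 3 = 1) (s t : Zω) (hs : s ^ 3 = 1) :
    cyc ψ s t = cyc ψ (s ^ 2) (t * s ^ 2) := by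
  have hs0 : s ≠ 0 := by rintro rfl; simp at hs
  apply le_antisymm (cyc_inv_le ψ hc s t hs0)
  have := cyc_inv_le ψ hc (s ^ 2) (t * s ^ 2) (by positivity)
  have e1 : (s ^ 2) ^ 2 = s := by linear_combination s * hs
  have e2 : t * s ^ 2 * (s ^ 2) ^ 2 = t := by linear_combination t * (s ^ 3 + 1) * hs
  rwa [e2, e1] at this

variable (ψ : MulChar F Zω)

theorem psi_cube (hval : ∀ x, x ≠ 0 → ψ x = 1 ∨ ψ x = ωZ ∨ ψ x = ωZ ^ 2)
    (x : F) (hx : x ≠ 0) : ψ x ^ 3 = 1 := by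
  rcases hval x hx with h | h | h <;> rw [h]
  · simp
  · exact omZ_cube
  · linear_combination (ωZ ^ 3 + 1) * omZ_cube

theorem fib_row (hval : ∀ x, x ≠ 0 → ψ x = 1 ∨ ψ x = ωZ ∨ ψ x = ωZ ^ 2)
    (s : Zω) (hs0 : s ≠ 0) :
    fib ψ s = cyc ψ s 1 + cyc ψ s ωZ + cyc ψ s (ωZ ^ 2) + (if s = 1 then 1 else 0) := by
  classical
  have e : (if s = 1 then 1 else 0 : ℕ) = ∑ x : F, if x = 1 ∧ s = 1 then 1 else 0 := by
    by_cases h : s = 1 <;> simp [h]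
  rw [e]
  unfold fib cyc
  simp only [Finset.card_filter]
  rw [← Finset.sum_add_distrib, ← Finset.sum_add_distrib, ← Finset.sum_add_distrib]
  refine Finset.sum_congr rfl fun x _ => ?_
  by_cases hx : x = 1
  · subst hx
    simp [eq_comm]
    by_cases h : s = 1
    · simp [h, omZ_ne_zero, Ne.symm omZ_ne_zero, Ne.symm omZ_sq_ne_zero, psi_zero ψ]
    · simp [h, Ne.symm omZ_ne_zero, Ne.symm omZ_sq_ne_zero, psi_zero ψ]
  · have := hval (1 - x) (sub_ne_zero.mpr (Ne.symm hx))
    by_cases hh : ψ x = s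
    · rcases this with h | h | h <;> simp [hh, h, hx, omZ_ne_one, omZ_sq_ne_one, omZ_sq_ne,
        Ne.symm omZ_ne_one, Ne.symm omZ_sq_ne_one, Ne.symm omZ_sq_ne, omZ_ne_neg]
    · simp [hh, hx]

theorem fib_total (hval : ∀ x, x ≠ 0 → ψ x = 1 ∨ ψ x = ωZ ∨ ψ x = ωZ ^ 2)
    : fib ψ 1 + fib ψ ωZ + fib ψ (ωZ ^ 2) + 1 = Fintype.card F := by
  classical
  have e : (1 : ℕ) = ∑ x : F, if x = 0 then 1 else 0 := by simp
  rw [← Finset.card_univ, Finset.card_eq_sum_ones]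
  conv_lhs => rw [e]
  unfold fib
  simp only [Finset.card_filter]
  rw [← Finset.sum_add_distrib, ← Finset.sum_add_distrib, ← Finset.sum_add_distrib]
  refine Finset.sum_congr rfl fun x _ => ?_
  by_cases hx : x = 0
  · subst hx
    simp [Ne.symm omZ_ne_zero, Ne.symm omZ_sq_ne_zero, psi_zero ψ]
  · rcases hval x hx with h | h | h <;> simp [h, hx, omZ_ne_one, omZ_sq_ne_one, omZ_sq_ne,
        Ne.symm omZ_ne_one, Ne.symm omZ_sq_ne_one, Ne.symm omZ_sq_ne, omZ_ne_neg]

theorem fib_sum (hval : ∀ x, x ≠ 0 → ψ x = 1 ∨ ψ x = ωZ ∨ ψ x = ωZ ^ 2)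
    : ∑ x : F, ψ x = fib ψ 1 + fib ψ ωZ * ωZ + fib ψ (ωZ ^ 2) * ωZ ^ 2 := by
  classical
  unfold fib
  simp only [Finset.card_filter]
  push_cast
  simp only [Finset.sum_mul]
  rw [← Finset.sum_add_distrib, ← Finset.sum_add_distrib]
  refine Finset.sum_congr rfl fun x _ => ?_
  by_cases hx : x = 0
  · subst hx
    simp [Ne.symm omZ_ne_zero, Ne.symm omZ_sq_ne_zero, psi_zero ψ]
  · rcases hval x hx with h | h | h <;> simp [h, omZ_ne_one, omZ_sq_ne_one, omZ_sq_ne,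
        Ne.symm omZ_ne_one, Ne.symm omZ_sq_ne_one, Ne.symm omZ_sq_ne, omZ_ne_neg]

theorem jac_cyc (hval : ∀ x, x ≠ 0 → ψ x = 1 ∨ ψ x = ωZ ∨ ψ x = ωZ ^ 2)
    : jacobiSum ψ ψ =
    (cyc ψ 1 1 + cyc ψ ωZ (ωZ ^ 2) + cyc ψ (ωZ ^ 2) ωZ) +
    (cyc ψ 1 ωZ + cyc ψ ωZ 1 + cyc ψ (ωZ ^ 2) (ωZ ^ 2)) * ωZ +
    (cyc ψ 1 (ωZ ^ 2) + cyc ψ (ωZ ^ 2) 1 + cyc ψ ωZ ωZ) * ωZ ^ 2 := by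
  classical
  unfold jacobiSum cyc
  simp only [Finset.card_filter]
  push_cast
  simp only [← Finset.sum_add_distrib, Finset.sum_mul]
  refine Finset.sum_congr rfl fun x _ => ?_
  by_cases hx : x = 0
  · subst hx
    simp [Ne.symm omZ_ne_zero, Ne.symm omZ_sq_ne_zero, psi_zero ψ]
  by_cases hx1 : x = 1
  · subst hx1
    simp [Ne.symm omZ_ne_zero, Ne.symm omZ_sq_ne_zero, psi_zero ψ]
  have h1 := hval x hx
  have h2 := hval (1 - x) (sub_ne_zero.mpr (Ne.symm hx1))
  have c1 : ωZ * ωZ ^ 2 = 1 := by linear_combination omZ_cube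
  have c2 : ωZ ^ 2 * ωZ = 1 := by linear_combination omZ_cube
  have c3 : ωZ ^ 2 * ωZ ^ 2 = ωZ := by linear_combination ωZ * omZ_cube
  have c4 : ωZ * ωZ = ωZ ^ 2 := by ring
  rcases h1 with h | h | h <;> rcases h2 with h' | h' | h' <;>
    simp [h, h', omZ_ne_one, omZ_sq_ne_one, omZ_sq_ne, c1, c2, c3, c4,
        Ne.symm omZ_ne_one, Ne.symm omZ_sq_ne_one, Ne.symm omZ_sq_ne, omZ_ne_neg]

theorem fib_eq (hval : ∀ x, x ≠ 0 → ψ x = 1 ∨ ψ x = ωZ ∨ ψ x = ωZ ^ 2)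
    (hψ : ψ ≠ 1) {n : ℕ} (hn : Fintype.card F = 3 * n + 1) :
    fib ψ 1 = n ∧ fib ψ ωZ = n ∧ fib ψ (ωZ ^ 2) = n := by
  have h1 := fib_sum ψ hval
  rw [MulChar.sum_eq_zero_of_ne_one hψ] at h1
  have h2 := fib_total ψ hval
  have := rep_zero (a := (fib ψ 1 : ℤ) - fib ψ (ωZ ^ 2)) (b := (fib ψ ωZ : ℤ) - fib ψ (ωZ ^ 2))
    (by push_cast; linear_combination -h1 - (fib ψ (ωZ ^ 2) : Zω) * omZ_quad)
  omega

/-- The main combinatorial computation. -/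
theorem jac_main (hval : ∀ x, x ≠ 0 → ψ x = 1 ∨ ψ x = ωZ ∨ ψ x = ωZ ^ 2)
    (hψ : ψ ≠ 1) {n : ℕ} (hn : Fintype.card F = 3 * n + 1) :
    ∃ u v : ℤ, -jacobiSum ψ ψ = 1 + 3 * (u + v * ωZ) ∧ (3 : ℤ) ∣ (n - (-u - v)) ∧
      (3 : ℤ) ∣ (cyc ψ ωZ ωZ + 2 * cyc ψ ωZ (ωZ ^ 2)) - u := by
  have hc := psi_cube ψ hval
  have w3 := omZ_cube
  have w6 : (ωZ ^ 2) ^ 3 = 1 := by linear_combination (ωZ ^ 3 + 1) * omZ_cube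
  have c4 : (ωZ ^ 2) ^ 2 = ωZ := by linear_combination ωZ * omZ_cube
  have c3 : ωZ ^ 2 * ωZ ^ 2 = ωZ := by linear_combination ωZ * omZ_cube
  have a1 := cyc_symm ψ 1 ωZ
  have a2 := cyc_inv ψ hc ωZ 1 w3
  have b1 := cyc_symm ψ 1 (ωZ ^ 2)
  have b2 := cyc_inv ψ hc (ωZ ^ 2) 1 w6
  have d1 := cyc_symm ψ ωZ (ωZ ^ 2)
  rw [one_mul] at a2 b2
  rw [c4] at b2
  obtain ⟨f1, f2, f3⟩ := fib_eq ψ hval hψ hn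
  have r1 := fib_row ψ hval 1 one_ne_zero
  have r2 := fib_row ψ hval ωZ omZ_ne_zero
  rw [if_pos rfl] at r1
  rw [if_neg omZ_ne_one] at r2
  have hJ := jac_cyc ψ hval
  rw [← d1, ← a2, ← a1, ← b2, ← b1] at hJ
  rw [← b2, ← b1] at r2 ⊢
  rw [← a1] at r2
  generalize cyc ψ 1 ωZ = A at *
  generalize cyc ψ 1 (ωZ ^ 2) = B at *
  generalize cyc ψ ωZ (ωZ ^ 2) = C at *
  generalize cyc ψ 1 1 = D at *
  refine ⟨B - C, B - A, ?_, by omega, by omega⟩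
  have hD : C = D + 1 := by omega
  rw [hJ, hD]
  push_cast
  linear_combination (-3 * B : Zω) * omZ_quad

theorem psi_lam (hval : ∀ x, x ≠ 0 → ψ x = 1 ∨ ψ x = ωZ ∨ ψ x = ωZ ^ 2)
    (φ : Zω →+* F) (hψ : ψ ≠ 1) {n : ℕ} (hn : Fintype.card F = 3 * n + 1)
    (hφ : ∀ x, φ (ψ x) = x ^ n) (hn0 : n ≠ 0) :
    ψ (φ lamZ) = ωZ ^ (cyc ψ ωZ ωZ + 2 * cyc ψ ωZ (ωZ ^ 2)) := by
  classical
  obtain ⟨f1, f2, f3⟩ := fib_eq ψ hval hψ hn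
  set S := Finset.univ.filter (fun x : F => ψ x = ωZ) with hS
  have hcard : S.card = n := f2
  have hpoly : (Polynomial.X ^ n - Polynomial.C (φ ωZ) : Polynomial F) =
      ∏ x ∈ S, (Polynomial.X - Polynomial.C x) := by
    have hm1 : (Polynomial.X ^ n - Polynomial.C (φ ωZ) : Polynomial F).Monic :=
      Polynomial.monic_X_pow_sub_C _ hn0
    have hm2 : (∏ x ∈ S, (Polynomial.X - Polynomial.C x)).Monic :=
      Polynomial.monic_prod_of_monic _ _ fun x _ => Polynomial.monic_X_sub_C x
    have hd1 : (Polynomial.X ^ n - Polynomial.C (φ ωZ) : Polynomial F).degree = n :=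
      Polynomial.degree_X_pow_sub_C (Nat.pos_of_ne_zero hn0) _
    have hd2 : (∏ x ∈ S, (Polynomial.X - Polynomial.C x)).degree = (n : WithBot ℕ) := by
      rw [Polynomial.degree_prod]; simp [hcard]
    refine Polynomial.eq_of_degree_sub_lt_of_eval_finset_eq S ?_ ?_
    · rw [hcard, ← hd1]
      apply Polynomial.degree_sub_lt
      · rw [hd1, hd2]
      · exact hm1.ne_zero
      · rw [hm1, hm2]
    · intro x hx
      rw [Polynomial.eval_prod, Finset.prod_eq_zero hx (by simp)]
      have : ψ x = ωZ := by simpa [hS] using hx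
      simp [← hφ, this]
  have h1 := congrArg (Polynomial.eval 1) hpoly
  rw [Polynomial.eval_prod] at h1
  simp at h1
  have e : φ lamZ = 1 - φ ωZ := by simp [lamZ]
  rw [e, h1, map_prod]
  have hp : ∀ x ∈ S, ψ (1 - x) = (if ψ (1 - x) = ωZ then ωZ else 1) *
      (if ψ (1 - x) = ωZ ^ 2 then ωZ ^ 2 else 1) := by
    intro x hx
    have hx' : ψ x = ωZ := by simpa [hS] using hx
    have hx1 : x ≠ 1 := by
      rintro rfl; apply omZ_ne_one; rw [← hx']; simp
    rcases hval (1 - x) (sub_ne_zero.mpr (Ne.symm hx1)) with h | h | h <;>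
      simp [h, omZ_ne_one, omZ_sq_ne_one, omZ_sq_ne,
        Ne.symm omZ_ne_one, Ne.symm omZ_sq_ne_one, Ne.symm omZ_sq_ne, omZ_ne_neg]
  rw [Finset.prod_congr rfl hp, Finset.prod_mul_distrib, ← Finset.prod_filter, ← Finset.prod_filter,
    Finset.prod_const, Finset.prod_const, hS, Finset.filter_filter, Finset.filter_filter,
    pow_add, pow_mul]
  rfl

end fieldpart

def IsRt (s : Zω) : Prop := s = 1 ∨ s = ωZ ∨ s = ωZ ^ 2

theorem IsRt.cube {s : Zω} (h : IsRt s) : s ^ 3 = 1 := by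
  rcases h with h | h | h <;> rw [h]
  · simp
  · exact omZ_cube
  · linear_combination (ωZ ^ 3 + 1) * omZ_cube

theorem root_eq {p s t : Zω} (hp : ¬ IsUnit p) (h3 : IsCoprime p 3) (hs : IsRt s) (ht : IsRt t)
    (h : p ∣ s - t) : s = t := by
  by_contra hne
  apply hp
  have hs3 := hs.cube
  have ht3 := ht.cube
  have h0 : (s - t) * (s ^ 2 + s * t + t ^ 2) = 0 := by linear_combination hs3 - ht3
  have h1 : s ^ 2 + s * t + t ^ 2 = 0 :=
    (mul_eq_zero.mp h0).resolve_left (sub_ne_zero.mpr hne)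
  have h2 : s - t ∣ 3 := by
    refine ⟨-(s - t) * (s * t) ^ 2, ?_⟩
    linear_combination (s * t) ^ 2 * h1 - 3 * (t ^ 3) * hs3 - 3 * ht3
  exact h3.isUnit_of_dvd' dvd_rfl (h.trans h2)

theorem nm_mod {p : Zω} (h3 : IsCoprime p 3) : NmNat p % 3 = 1 := by
  obtain ⟨x, y, hxy⟩ := h3
  obtain ⟨c, d, hy⟩ := Z_rep y
  have e : x * p = ((1 - 3 * c : ℤ) : Zω) + ((-3 * d : ℤ) : Zω) * ωZ := by
    rw [hy] at hxy; push_cast; linear_combination hxy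
  have h1 : ((NmNat x * NmNat p : ℕ) : ℤ) = (1 - 3 * c) ^ 2 - (1 - 3 * c) * (-3 * d) + (-3 * d) ^ 2 := by
    rw [← NmNat_mul, e, NmNat_rep]
  have h2 : ((NmNat x * NmNat p : ℕ) : ℤ) = 1 + 3 * (-2 * c + 3 * c ^ 2 + d - 3 * c * d + 3 * d ^ 2) := by
    rw [h1]; ring
  have h3 : NmNat p % 3 ≠ 0 := by
    intro h
    obtain ⟨k, hk⟩ := Nat.dvd_of_mod_eq_zero h
    rw [hk] at h2
    push_cast at h2
    have : (3 : ℤ) ∣ 1 := ⟨NmNat x * k - (-2 * c + 3 * c ^ 2 + d - 3 * c * d + 3 * d ^ 2), by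
      linear_combination -h2⟩
    omega
  obtain ⟨a, b, hp⟩ := Z_rep p
  have h4 := NmNat_rep a b
  rw [← hp] at h4
  have h5 : (NmNat p : ℤ) = (a + b) * (a + b) - 3 * (a * b) := by rw [h4]; ring
  have h6 : (a + b) * (a + b) % 3 = 0 ∨ (a + b) * (a + b) % 3 = 1 := by
    have : (a + b) % 3 = 0 ∨ (a + b) % 3 = 1 ∨ (a + b) % 3 = 2 := by omega
    rcases this with h | h | h <;> simp [Int.mul_emod, h]
  omega

theorem sym_rt {χ : Zω → Zω → Zω} (hχ : IsCubicSymbol χ) {a p : Zω} (hp : Prime p)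
    (h3 : IsCoprime p 3) (ha : ¬ p ∣ a) : IsRt (χ a p) := by
  rcases ((hχ.2.2.2 a p hp h3).2 ha).1 with h | h | h
  · left; exact Subtype.ext h
  · right; left; exact Subtype.ext h
  · right; right; exact Subtype.ext h

theorem sym_congr {χ : Zω → Zω → Zω} (hχ : IsCubicSymbol χ) {a b p : Zω} (hp : Prime p)
    (h3 : IsCoprime p 3) (hab : p ∣ a - b) : χ a p = χ b p := by
  by_cases ha : p ∣ a
  · have hb : p ∣ b := (dvd_sub_right ha).mp hab
    rw [(hχ.2.2.2 a p hp h3).1 ha, (hχ.2.2.2 b p hp h3).1 hb]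
  · have hb : ¬ p ∣ b := fun hb => ha ((dvd_sub_left hb).mp hab)
    apply root_eq hp.not_unit h3 (sym_rt hχ hp h3 ha) (sym_rt hχ hp h3 hb)
    have h1 := ((hχ.2.2.2 a p hp h3).2 ha).2
    have h2 := ((hχ.2.2.2 b p hp h3).2 hb).2
    have h4 := hab.trans (sub_dvd_pow_sub_pow a b ((NmNat p - 1) / 3))
    have := dvd_add (dvd_sub h2 h1) h4
    convert this using 1; ring

theorem sym_one {χ : Zω → Zω → Zω} (hχ : IsCubicSymbol χ) {p : Zω} (hp : Prime p)
    (h3 : IsCoprime p 3) : χ 1 p = 1 := by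
  have h1 : ¬ p ∣ 1 := fun h => hp.not_unit (isUnit_of_dvd_one h)
  apply root_eq hp.not_unit h3 (sym_rt hχ hp h3 h1) (Or.inl rfl)
  have := ((hχ.2.2.2 1 p hp h3).2 h1).2
  rw [one_pow] at this
  rw [← dvd_neg]; convert this using 1; ring

/-- The residue character attached to a prime. -/
noncomputable def resChar {χ : Zω → Zω → Zω} (hχ : IsCubicSymbol χ) {p : Zω} (hp : Prime p)
    (h3 : IsCoprime p 3) : MulChar (Zω ⧸ Ideal.span {p}) Zω where
  toFun x := χ (Quotient.out x) p
  map_one' := by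
    rw [← sym_one hχ hp h3]
    apply sym_congr hχ hp h3
    rw [← Ideal.mem_span_singleton, ← Ideal.Quotient.eq]
    simp
  map_mul' x y := by
    rw [← hχ.2.1]
    apply sym_congr hχ hp h3
    rw [← Ideal.mem_span_singleton, ← Ideal.Quotient.eq]
    simp
  map_nonunit' x hx := by
    apply (hχ.2.2.2 _ p hp h3).1
    by_contra h
    apply hx
    have hm : (Ideal.span {p}).IsMaximal :=
      PrincipalIdealRing.isMaximal_of_irreducible hp.irreducible
    letI := Ideal.Quotient.field (Ideal.span {p})
    rw [isUnit_iff_ne_zero]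
    rintro rfl
    apply h
    rw [← Ideal.mem_span_singleton, ← Ideal.Quotient.eq_zero_iff_mem]
    simp

theorem resChar_mk {χ : Zω → Zω → Zω} (hχ : IsCubicSymbol χ) {p : Zω} (hp : Prime p)
    (h3 : IsCoprime p 3) (a : Zω) :
    resChar hχ hp h3 (Ideal.Quotient.mk _ a) = χ a p := by
  change χ (Quotient.out (Ideal.Quotient.mk (Ideal.span {p}) a)) p = _
  apply sym_congr hχ hp h3
  rw [← Ideal.mem_span_singleton, ← Ideal.Quotient.eq]
  simp

theorem jac_norm {F : Type*} [Field F] [Fintype F] [DecidableEq F] (ψ : MulChar F Zω)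
    (hval : ∀ x, x ≠ 0 → ψ x = 1 ∨ ψ x = ωZ ∨ ψ x = ωZ ^ 2) (hψ : ψ ≠ 1) :
    NmNat (jacobiSum ψ ψ) = Fintype.card F := by
  have hinj : Function.Injective (Zω.subtype) := Subtype.val_injective
  have hc := psi_cube ψ hval
  have hψ2 : ψ * ψ ≠ 1 := by
    intro h
    apply hψ
    apply MulChar.ext
    intro x
    have h1 := hc x x.ne_zero
    have h2 : ψ x * ψ x = 1 := by
      rw [← MulChar.mul_apply, h, MulChar.one_apply_coe]
    rw [MulChar.one_apply_coe]
    linear_combination h1 - ψ x * h2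
  have key := jacobiSum_mul_jacobiSum_inv (F := F) (F' := ℂ) (χ := ψ.ringHomComp Zω.subtype)
    (φ := ψ.ringHomComp Zω.subtype) ?_ ?_ ?_ ?_
  · have hst : (ψ.ringHomComp Zω.subtype)⁻¹ =
        (ψ.ringHomComp Zω.subtype).ringHomComp (starRingEnd ℂ) := by
      rw [← MulChar.star_eq_inv]
      rfl
    rw [hst, jacobiSum_ringHomComp, jacobiSum_ringHomComp, jacobiSum_ringHomComp, Complex.mul_conj] at key
    have k2 : (NmNat (jacobiSum ψ ψ) : ℝ) = Fintype.card F := by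
      rw [NmNat_cast]; exact_mod_cast key
    exact_mod_cast k2
  · have : ringChar ℂ = 0 := ringChar.eq_zero
    rw [this]
    exact (CharP.ringChar_ne_zero_of_finite F).symm
  · exact (MulChar.ringHomComp_ne_one_iff hinj).mpr hψ
  · exact (MulChar.ringHomComp_ne_one_iff hinj).mpr hψ
  · rw [← MulChar.ringHomComp_mul]
    exact (MulChar.ringHomComp_ne_one_iff hinj).mpr hψ2

theorem jac_zero {F : Type*} [Field F] [Fintype F] (ψ : MulChar F Zω) (φ : Zω →+* F)
    {n : ℕ} (hn : Fintype.card F = 3 * n + 1) (hφ : ∀ x, φ (ψ x) = x ^ n) (hn0 : n ≠ 0) :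
    φ (jacobiSum ψ ψ) = 0 := by
  unfold jacobiSum
  rw [map_sum]
  simp only [map_mul, hφ]
  set f : Polynomial F := Polynomial.X ^ n * (1 - Polynomial.X) ^ n with hf
  have hd : f.natDegree ≤ 2 * n := by
    rw [hf]
    compute_degree
    omega
  have : ∀ x : F, x ^ n * (1 - x) ^ n = ∑ i ∈ Finset.range (2 * n + 1), f.coeff i * x ^ i := by
    intro x
    rw [← Polynomial.eval_eq_sum_range' (Nat.lt_succ_of_le hd)]
    simp [hf]
  simp only [this]
  rw [Finset.sum_comm]
  apply Finset.sum_eq_zero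
  intro i hi
  rw [← Finset.mul_sum, FiniteField.sum_pow_lt_card_sub_one, mul_zero]
  rw [Finset.mem_range] at hi
  omega

def Law (χ : Zω → Zω → Zω) (c : Zω) : Prop :=
  ∃ (e : Zω) (u v : ℤ), IsUnit e ∧ e * c = 1 + 3 * (u + v * ωZ) ∧
    ((χ ωZ c : Zω) : ℂ) = ω ^ (-u - v) ∧ ((χ lamZ c : Zω) : ℂ) = ω ^ u

theorem omZ_unit : IsUnit ωZ := IsUnit.of_mul_eq_one (ωZ ^ 2) (by linear_combination omZ_cube)

theorem law_prime {χ : Zω → Zω → Zω} (hχ : IsCubicSymbol χ) {p : Zω} (hp : Prime p)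
    (h3 : IsCoprime p 3) : Law χ p := by
  classical
  have hm : (Ideal.span {p}).IsMaximal :=
    PrincipalIdealRing.isMaximal_of_irreducible hp.irreducible
  letI := Ideal.Quotient.field (Ideal.span {p})
  have hcard0 := card_quot p
  have hp0 : NmNat p ≠ 0 := fun h => hp.ne_zero (NmNat_eq_zero.mp h)
  haveI : Finite (Zω ⧸ Ideal.span {p}) := Nat.finite_of_card_ne_zero (by rw [hcard0]; exact hp0)
  letI : Fintype (Zω ⧸ Ideal.span {p}) := Fintype.ofFinite _
  have hcard : Fintype.card (Zω ⧸ Ideal.span {p}) = NmNat p := by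
    rw [← Nat.card_eq_fintype_card, hcard0]
  have hmod := nm_mod h3
  obtain ⟨n, hn⟩ : ∃ n, NmNat p = 3 * n + 1 := ⟨NmNat p / 3, by omega⟩
  have hnn : (NmNat p - 1) / 3 = n := by omega
  have hn0 : n ≠ 0 := by
    have : 1 < Fintype.card (Zω ⧸ Ideal.span {p}) := Fintype.one_lt_card
    omega
  have hq : Fintype.card (Zω ⧸ Ideal.span {p}) = 3 * n + 1 := by rw [hcard, hn]
  set φ := Ideal.Quotient.mk (Ideal.span {p}) with hφdef
  set ψ := resChar hχ hp h3 with hψdef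
  have hmk : ∀ a, ψ (φ a) = χ a p := resChar_mk hχ hp h3
  have hz : ∀ a, φ a = 0 ↔ p ∣ a := fun a => by
    rw [hφdef, Ideal.Quotient.eq_zero_iff_mem, Ideal.mem_span_singleton]
  have hval : ∀ x, x ≠ 0 → ψ x = 1 ∨ ψ x = ωZ ∨ ψ x = ωZ ^ 2 := by
    intro x hx
    obtain ⟨a, rfl⟩ := Ideal.Quotient.mk_surjective x
    rw [hmk]
    exact sym_rt hχ hp h3 (fun h => hx ((hz a).mpr h))
  have hφ : ∀ x, φ (ψ x) = x ^ n := by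
    intro x
    obtain ⟨a, rfl⟩ := Ideal.Quotient.mk_surjective x
    rw [hmk]
    by_cases ha : p ∣ a
    · rw [(hχ.2.2.2 a p hp h3).1 ha]
      have := (hz a).mpr ha
      rw [← hφdef, this, map_zero, zero_pow hn0]
    · have := ((hχ.2.2.2 a p hp h3).2 ha).2
      rw [hnn, ← hz, map_sub, map_pow, sub_eq_zero] at this
      exact this.symm
  have hψ : ψ ≠ 1 := by
    intro h
    obtain ⟨g, hg⟩ := exists_pow_ne_one_of_isCyclic (G := (Zω ⧸ Ideal.span {p})ˣ) hn0
      (by rw [Nat.card_units, Nat.card_eq_fintype_card, hq]; omega)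
    apply hg
    have := hφ (g : Zω ⧸ Ideal.span {p})
    rw [h, MulChar.one_apply_coe, map_one] at this
    apply Units.ext
    push_cast
    exact this.symm
  obtain ⟨u, v, hJ, hu, hv⟩ := jac_main ψ hval hψ hq
  have hlam := psi_lam ψ hval φ hψ hq hφ hn0
  have hnorm := jac_norm ψ hval hψ
  have hdvd := (hz _).mp (jac_zero ψ φ hq hφ hn0)
  obtain ⟨t, ht⟩ := hdvd
  have htn : NmNat t = 1 := by
    rw [ht, NmNat_mul, hcard] at hnorm
    exact Nat.eq_of_mul_eq_mul_left (Nat.pos_of_ne_zero hp0) (by rw [hnorm, mul_one])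
  refine ⟨-t, u, v, (NmNat_unit htn).neg, by rw [← hJ, ht]; ring, ?_, ?_⟩
  · have hw : ¬ p ∣ ωZ := fun h => hp.not_unit (isUnit_of_dvd_unit h omZ_unit)
    have h1 := ((hχ.2.2.2 ωZ p hp h3).2 hw).2
    rw [hnn] at h1
    have hrt : IsRt (ωZ ^ n) := by
      have : n % 3 = 0 ∨ n % 3 = 1 ∨ n % 3 = 2 := by omega
      rw [← Nat.div_add_mod n 3, pow_add, pow_mul, omZ_cube, one_pow, one_mul]
      rcases this with h | h | h <;> rw [h]
      · left; simp
      · right; left; simp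
      · right; right; rfl
    have := root_eq hp.not_unit h3 hrt (sym_rt hχ hp h3 hw) h1
    rw [← this, ← om_zpow_eq hu]
    push_cast
    simp [omZ_coe]
  · rw [← hmk, hlam, ← om_zpow_eq hv]
    push_cast
    rw [omZ_coe]
    exact_mod_cast rfl

theorem law_unit {χ : Zω → Zω → Zω} (hχ : IsCubicSymbol χ) {c : Zω} (hc : IsUnit c) :
    Law χ c := by
  have h2 : ¬ IsUnit (2 : Zω) := by
    intro h
    have h1 := unit_NmNat h
    have h3 := NmNat_rep 2 0
    simp at h3
    rw [h1] at h3
    norm_num at h3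
  obtain ⟨p, hpi, hpd⟩ := WfDvdMonoid.exists_irreducible_factor h2 two_ne_zero
  have hp : Prime p := hpi.prime
  have h3 : IsCoprime p 3 := by
    obtain ⟨k, hk⟩ := hpd
    exact ⟨-k, 1, by linear_combination hk⟩
  have hcp : Prime (c * p) := (associated_unit_mul_left p c hc).prime_iff.mpr hp
  have hc3 : IsCoprime (c * p) 3 := (isCoprime_mul_unit_left_left hc p 3).mpr h3
  have hN : NmNat (c * p) = NmNat p := by rw [NmNat_mul, unit_NmNat hc, one_mul]
  have key : ∀ a, ¬ p ∣ a → χ a c = 1 := by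
    intro a ha
    have hca : ¬ c * p ∣ a := fun h => ha ((dvd_mul_left p c).trans h)
    have r1 := sym_rt hχ hp h3 ha
    have h1 := ((hχ.2.2.2 a p hp h3).2 ha).2
    have r2 := sym_rt hχ hcp hc3 hca
    have h2 := (dvd_mul_left p c).trans ((hχ.2.2.2 a (c * p) hcp hc3).2 hca).2
    rw [hN] at h2
    have := root_eq hp.not_unit h3 r2 r1 (by convert dvd_sub h1 h2 using 1; ring)
    rw [hχ.1] at this
    have hne : χ a p ≠ 0 := by
      intro h; have := r1.cube; rw [h] at this; simp at this
    exact mul_right_cancel₀ hne (by rw [this, one_mul])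
  obtain ⟨e, he⟩ := hc.exists_left_inv
  have k1 := key ωZ (fun h => hp.not_unit (isUnit_of_dvd_unit h omZ_unit))
  have k2 := key lamZ (fun h => hp.not_unit (h3.isUnit_of_dvd' dvd_rfl (h.trans
    ⟨1 - ωZ ^ 2, by unfold lamZ; linear_combination omZ_quad - omZ_cube⟩)))
  exact ⟨e, 0, 0, IsUnit.of_mul_eq_one c he, by rw [he]; simp, by simp [k1], by simp [k2]⟩

theorem law_mul {χ : Zω → Zω → Zω} (hχ : IsCubicSymbol χ) {c d : Zω} (hc : Law χ c)
    (hd : Law χ d) : Law χ (c * d) := by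
  obtain ⟨e, u, v, he, h1, h2, h3⟩ := hc
  obtain ⟨e', u', v', he', h1', h2', h3'⟩ := hd
  refine ⟨e * e', u + u' + 3 * (u * u' - v * v'), v + v' + 3 * (u * v' + v * u' - v * v'),
    he.mul he', ?_, ?_, ?_⟩
  · push_cast
    linear_combination (e' * d) * h1 + (1 + 3 * (u + v * ωZ)) * h1' + 9 * v * v' * omZ_quad
  · rw [hχ.1]; push_cast; rw [h2, h2', ← zpow_add₀ om_ne_zero]
    apply om_zpow_eq
    refine ⟨(u * u' - v * v') + (u * v' + v * u' - v * v'), by ring⟩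
  · rw [hχ.1]; push_cast; rw [h3, h3', ← zpow_add₀ om_ne_zero]
    apply om_zpow_eq
    refine ⟨-(u * u' - v * v'), by ring⟩

theorem law_all {χ : Zω → Zω → Zω} (hχ : IsCubicSymbol χ) (c : Zω) :
    IsCoprime c 3 → Law χ c := by
  induction c using UniqueFactorizationMonoid.induction_on_prime with
  | h₁ =>
    intro h
    rw [isCoprime_zero_left] at h
    have h1 := unit_NmNat h
    have h3 := NmNat_rep 3 0
    simp at h3
    rw [h1] at h3
    norm_num at h3
  | h₂ x hx => intro _; exact law_unit hχ hx
  | h₃ a p ha hp ih =>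
    intro h
    exact law_mul hχ (law_prime hχ hp h.of_mul_left_left) (ih h.of_mul_left_right)

theorem law_primary {χ : Zω → Zω → Zω} (hχ : IsCubicSymbol χ) (c : Zω) (u v : ℤ)
    (hc : c = 1 + 3 * (u + v * ωZ)) :
    ((χ ωZ c : Zω) : ℂ) = ω ^ (-u - v) ∧ ((χ lamZ c : Zω) : ℂ) = ω ^ u := by
  obtain ⟨e, u', v', he, h1, h2, h3⟩ := law_all hχ c
    ⟨1, -(u + v * ωZ), by rw [hc]; ring⟩
  have he1 : e = 1 := by
    obtain ⟨a, b, hab⟩ := Z_rep e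
    have hN := NmNat_rep a b
    rw [← hab, unit_NmNat he] at hN
    have h4 : ((a + 3 * (a * u - b * v) : ℤ) : Zω) + ((b + 3 * (a * v + b * u - b * v) : ℤ) : Zω) * ωZ
        = ((1 + 3 * u' : ℤ) : Zω) + ((3 * v' : ℤ) : Zω) * ωZ := by
      push_cast
      rw [hab, hc] at h1
      linear_combination h1 - 3 * b * v * omZ_quad
    obtain ⟨h5, h6⟩ := rep_inj h4
    have hb : b = 0 := by
      have hb1 : b < 2 := by push_cast at hN; nlinarith [sq_nonneg (2 * a - b)]
      have hb2 : -2 < b := by push_cast at hN; nlinarith [sq_nonneg (2 * a - b)]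
      generalize a * v + b * u - b * v = k at h6
      omega
    subst hb
    have ha : a = 1 := by
      have ha1 : a < 2 := by push_cast at hN; nlinarith
      have ha2 : -2 < a := by push_cast at hN; nlinarith
      generalize a * u - 0 * v = k at h5
      omega
    rw [hab, ha]; simp
  rw [he1, one_mul, hc] at h1
  obtain ⟨h5, h6⟩ := rep_inj (a := 1 + 3 * u) (b := 3 * v) (c := 1 + 3 * u') (d := 3 * v')
    (by push_cast; linear_combination h1)
  have : u' = u := by omega
  have : v' = v := by omega
  subst u' v'
  exact ⟨h2, h3⟩

theorem law_nine {χ : Zω → Zω → Zω} (hχ : IsCubicSymbol χ) (c : Zω) (α₂ α₃ : ℤ)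
    (h : (9 : Zω) ∣ (c - (1 + (α₂ : Zω) * lamZ ^ 2 + (α₃ : Zω) * lamZ ^ 3))) :
    ((χ ωZ c : Zω) : ℂ) = ω ^ α₂ ∧ ((χ lamZ c : Zω) : ℂ) = ω ^ (-α₃) := by
  obtain ⟨k, hk⟩ := h
  obtain ⟨x, y, rfl⟩ := Z_rep k
  have := law_primary hχ c (-α₃ + 3 * x) (-α₂ - 2 * α₃ + 3 * y) (by
    push_cast
    unfold lamZ at hk
    linear_combination hk + (α₂ + α₃ * (4 - ωZ)) * omZ_quad)
  rw [this.1, this.2]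
  constructor
  · apply om_zpow_eq; exact ⟨α₃ - x - y, by ring⟩
  · apply om_zpow_eq; exact ⟨x, by ring⟩

open Complex in
/-- supplementary laws of cubic reciprocity. If
`c ≡ 1 + α₂λ² + α₃λ³ (mod 9)` with `α₂, α₃ ∈ {-1,0,1}`, then `(ω/c)₃ = ω^{α₂}`
and `(λ/c)₃ = ω^{-α₃}`; in particular if `c ≡ 1 (mod 9)` then
`(ω/c)₃ = (λ/c)₃ = 1`. -/
theorem supplementary_laws (χ : Zω → Zω → Zω) (hχ : IsCubicSymbol χ) :
    (∀ (c : Zω) (α₂ α₃ : ℤ), α₂ ∈ ({-1, 0, 1} : Set ℤ) → α₃ ∈ ({-1, 0, 1} : Set ℤ) →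
      (9 : Zω) ∣ (c - (1 + (α₂ : Zω) * lamZ ^ 2 + (α₃ : Zω) * lamZ ^ 3)) →
      ((χ ωZ c : Zω) : ℂ) = ω ^ α₂ ∧ ((χ lamZ c : Zω) : ℂ) = ω ^ (-α₃)) ∧
    (∀ c : Zω, (9 : Zω) ∣ (c - 1) → χ ωZ c = 1 ∧ χ lamZ c = 1) := by
  refine ⟨fun c α₂ α₃ _ _ h => law_nine hχ c α₂ α₃ h, fun c h => ?_⟩
  have := law_nine hχ c 0 0 (by simpa using h)
  exact ⟨Subtype.ext (by simpa using this.1), Subtype.ext (by simpa using this.2)⟩
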